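/- arXiv:2501.10853 — 2 statements merged into one kernel-verified Lean document; each statement's English description precedes it below -/
import Mathlib

section
/- For every real 2×2 matrix F one has ‖F‖² + 2·det F ≥ 0, and the squared Euclidean distance of F to SO(2) is given by inf_{R ∈ SO(2)} ‖F − R‖² = ‖F‖² − 2·√(‖F‖² + 2·det F) + 2; moreover this infimum is attained. -/
/-!
Identify `ℂ` with the matrices `!![x, -y; y, x]`, so that `SO(2)` is the unit circle. Expanding the
square, `‖F - R‖² = ‖F‖² - 2 tr (Fᵀ R) + 2` for orthogonal `R`, and for `R` corresponding to `w ∈ ℂ`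
the trace is the real inner product of `w` with `z = (F₀₀ + F₁₁) + (F₁₀ - F₀₁) i`. Hence minimizing
the distance means maximizing `⟪z, w⟫` over the unit circle: the maximum is `‖z‖`, and
`‖z‖² = ‖F‖² + 2 det F`.
-/

open Matrix

/-- Squared Frobenius norm of a real matrix. -/
noncomputable def frobSq {n : ℕ} (A : Matrix (Fin n) (Fin n) ℝ) : ℝ :=
  ∑ i, ∑ j, (A i j) ^ 2

/-- The special orthogonal group SO(2) as a set of real 2×2 matrices. -/
def SO2 : Set (Matrix (Fin 2) (Fin 2) ℝ) :=
  {Q | Qᵀ * Q = 1 ∧ Q.det = 1}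

open Metric Complex
open scoped RealInnerProductSpace

theorem isGreatest_inner_image_unitSphere {E : Type*} [NormedAddCommGroup E]
    [InnerProductSpace ℝ E] [Nontrivial E] (v : E) :
    IsGreatest ((fun u ↦ ⟪v, u⟫) '' sphere 0 1) ‖v‖ := by
  constructor
  · rcases eq_or_ne v 0 with rfl | hv
    · obtain ⟨u, hu⟩ := exists_norm_eq E zero_le_one
      exact ⟨u, by simpa using hu, by simp⟩
    · refine ⟨‖v‖⁻¹ • v, by simp [norm_smul, hv], ?_⟩
      simp only [real_inner_smul_right, real_inner_self_eq_norm_mul_norm]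
      exact inv_mul_cancel_left₀ (norm_ne_zero_iff.mpr hv) ‖v‖
  · rintro _ ⟨u, hu, rfl⟩
    simpa [mem_sphere_zero_iff_norm.mp hu] using real_inner_le_norm v u

section Frobenius

variable {n : ℕ} (A B : Matrix (Fin n) (Fin n) ℝ)

theorem frobSq_eq_trace_transpose_mul_self : frobSq A = (Aᵀ * A).trace := by
  simp only [frobSq, trace, diag_apply, mul_apply, transpose_apply, ← sq]
  exact Finset.sum_comm

theorem frobSq_sub : frobSq (A - B) = frobSq A - 2 * (Aᵀ * B).trace + frobSq B := by
  have trace_comm : (Bᵀ * A).trace = (Aᵀ * B).trace := by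
    rw [← trace_transpose, transpose_mul, transpose_transpose]
  simp only [frobSq_eq_trace_transpose_mul_self, transpose_sub, Matrix.sub_mul, Matrix.mul_sub,
    trace_sub, trace_comm]
  ring

variable {B} in
theorem frobSq_sub_of_transpose_mul_self_eq_one (hB : Bᵀ * B = 1) :
    frobSq (A - B) = frobSq A - 2 * (Aᵀ * B).trace + n := by
  rw [frobSq_sub, frobSq_eq_trace_transpose_mul_self B, hB, trace_one, Fintype.card_fin]

end Frobenius

theorem SO2_eq_specialOrthogonalGroup :
    SO2 = (specialOrthogonalGroup (Fin 2) ℝ : Set (Matrix (Fin 2) (Fin 2) ℝ)) := by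
  ext R
  rw [SetLike.mem_coe, mem_specialOrthogonalGroup_iff, mem_orthogonalGroup_iff']
  rfl

theorem SO2_eq_leftMulMatrix_image_unitSphere :
    SO2 = Algebra.leftMulMatrix basisOneI '' sphere 0 1 := by
  ext R
  simp only [SO2_eq_specialOrthogonalGroup, SetLike.mem_coe, Set.mem_image,
    mem_sphere_zero_iff_norm, Algebra.leftMulMatrix_complex]
  constructor
  · intro hR
    obtain ⟨h_diag, h_off, h_unit⟩ := mem_specialOrthogonalGroup_fin_two_iff.mp hR
    refine ⟨⟨R 0 0, R 1 0⟩, ?_, ?_⟩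
    · rw [← pow_eq_one_iff_of_nonneg (norm_nonneg _) two_ne_zero, Complex.sq_norm, normSq_mk]
      rw [h_off] at h_unit
      linarith
    · calc !![R 0 0, -R 1 0; R 1 0, R 0 0]
          = !![R 0 0, R 0 1; R 1 0, R 1 1] := by rw [h_off, h_diag]
        _ = R := R.etaExpand_eq
  · rintro ⟨w, hw, rfl⟩
    have h_unit : w.re * w.re + w.im * w.im = 1 := by
      rw [← normSq_apply, ← Complex.sq_norm, hw, one_pow]
    exact of_mem_specialOrthogonalGroup_fin_two_iff.mpr ⟨rfl, rfl, by linarith⟩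

/-- The complex number `z` such that `tr (Fᵀ R) = ⟪z, w⟫` for each conformal matrix
`R = !![w.re, -w.im; w.im, w.re]`. It is normalized so that `z / 2` represents the orthogonal
projection of `F` onto the conformal matrices. -/
def conformalCoeff (F : Matrix (Fin 2) (Fin 2) ℝ) : ℂ :=
  ⟨F 0 0 + F 1 1, F 1 0 - F 0 1⟩

section ConformalCoeff

variable (F : Matrix (Fin 2) (Fin 2) ℝ)

theorem frobSq_add_two_mul_det : frobSq F + 2 * F.det = ‖conformalCoeff F‖ ^ 2 := by
  simp only [frobSq, Fin.sum_univ_two, det_fin_two, Complex.sq_norm, conformalCoeff, normSq_mk]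
  ring

theorem trace_transpose_mul_leftMulMatrix (w : ℂ) :
    (Fᵀ * Algebra.leftMulMatrix basisOneI w).trace = ⟪conformalCoeff F, w⟫ := by
  simp only [Algebra.leftMulMatrix_complex, trace_fin_two, mul_apply, transpose_apply, of_apply,
    cons_val', cons_val_zero, cons_val_one, cons_val_fin_one, Fin.sum_univ_two, Complex.inner,
    conformalCoeff, mul_re, conj_re, conj_im]
  ring

theorem setOf_frobSq_sub_SO2_eq_image :
    {x : ℝ | ∃ R ∈ SO2, x = frobSq (F - R)} =
      (fun t ↦ frobSq F - 2 * t + 2) '' ((fun w ↦ ⟪conformalCoeff F, w⟫) '' sphere 0 1) := by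
  have frobSq_sub_rotation : ∀ R ∈ SO2, frobSq (F - R) = frobSq F - 2 * (Fᵀ * R).trace + 2 :=
    fun R hR ↦ mod_cast frobSq_sub_of_transpose_mul_self_eq_one F hR.1
  calc {x : ℝ | ∃ R ∈ SO2, x = frobSq (F - R)}
      = (fun R ↦ frobSq (F - R)) '' SO2 := by simp only [Set.image, eq_comm]
    _ = (fun R ↦ frobSq F - 2 * (Fᵀ * R).trace + 2) '' SO2 := Set.image_congr frobSq_sub_rotation
    _ = (fun t ↦ frobSq F - 2 * t + 2) '' ((fun w ↦ ⟪conformalCoeff F, w⟫) '' sphere 0 1) := by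
      simp only [SO2_eq_leftMulMatrix_image_unitSphere, Set.image_image,
        trace_transpose_mul_leftMulMatrix]

end ConformalCoeff

theorem dist_sq_to_SO2 (F : Matrix (Fin 2) (Fin 2) ℝ) :
    0 ≤ frobSq F + 2 * F.det ∧
    IsLeast {x : ℝ | ∃ R ∈ SO2, x = frobSq (F - R)}
      (frobSq F - 2 * Real.sqrt (frobSq F + 2 * F.det) + 2) := by
  rw [frobSq_add_two_mul_det, Real.sqrt_sq (norm_nonneg _), setOf_frobSq_sub_SO2_eq_image]
  have h_anti : Antitone fun t : ℝ ↦ frobSq F - 2 * t + 2 := fun s t hst ↦ by dsimp only; gcongr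
  exact ⟨sq_nonneg _, h_anti.map_isGreatest (isGreatest_inner_image_unitSphere (conformalCoeff F))⟩
end

section
/- Define W̃ : ℝ^{2×2} → ℝ by W̃(F) = 1 − 2·det F if ‖F‖² + 2·det F < 1, and W̃(F) = (√(‖F‖² + 2·det F) − 1)² + 1 − 2·det F otherwise. Then W̃ is rank-one convex, and W̃(F) ≤ inf_{R ∈ SO(2)} ‖F − R‖² for all F ∈ ℝ^{2×2}. -/
open Matrix

/-- Rank-one convexity for functions on real 2×2 matrices. -/
def RankOneConvex (w : Matrix (Fin 2) (Fin 2) ℝ → ℝ) : Prop :=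
  ∀ A B : Matrix (Fin 2) (Fin 2) ℝ, (B - A).rank = 1 →
    ∀ t ∈ Set.Icc (0 : ℝ) 1,
      w (t • A + (1 - t) • B) ≤ t * w A + (1 - t) * w B

/-- The candidate relaxed energy. -/
noncomputable def Wtilde (F : Matrix (Fin 2) (Fin 2) ℝ) : ℝ :=
  if frobSq F + 2 * F.det < 1 then 1 - 2 * F.det
  else (Real.sqrt (frobSq F + 2 * F.det) - 1) ^ 2 + 1 - 2 * F.det

/-!
For `F = !![a, b; c, d]` let `z = (a + d) + (c - b) i`. Then `‖F‖² + 2 det F = |z|²`, so `W̃(F)` is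
the squared distance of `z` to the closed unit disc, plus `1 - 2 det F`. The squared distance is
convex in `z`, which is linear in `F`, so `W̃` is polyconvex; since `det` is affine along rank-one
segments, it is rank-one convex.

A rotation by the angle `θ` corresponds to the point `u = e^{iθ}` of the disc, and
`‖F - R‖² = |z - u|² + 1 - 2 det F`, where `|z - u|` is at least the distance of `z` to the disc.
-/

lemma det_eq_zero_of_rank_lt_card {n K : Type*} [Fintype n] [DecidableEq n] [Field K]
    {M : Matrix n n K} (h : M.rank < Fintype.card n) : M.det = 0 := by
  by_contra hdet
  exact h.ne (rank_of_isUnit M ((isUnit_iff_isUnit_det M).2 (isUnit_iff_ne_zero.2 hdet)))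

lemma det_smul_add_one_sub_smul_fin_two {S : Type*} [CommRing S] (A B : Matrix (Fin 2) (Fin 2) S)
    (t : S) :
    (t • A + (1 - t) • B).det = t * A.det + (1 - t) * B.det - t * (1 - t) * (B - A).det := by
  simp only [det_fin_two, Matrix.sub_apply, Matrix.add_apply, Matrix.smul_apply, smul_eq_mul]
  ring

/-- Polyconvexity in the sense of Ball for functions on real 2×2 matrices: being a convex function
of the matrix together with its determinant. The convex function
is required to be finite on the whole space. Polyconvexity implies rank-one convexity. -/
def Polyconvex (w : Matrix (Fin 2) (Fin 2) ℝ → ℝ) : Prop :=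
  ∃ g : Matrix (Fin 2) (Fin 2) ℝ × ℝ → ℝ, ConvexOn ℝ Set.univ g ∧ ∀ F, w F = g (F, F.det)

theorem Polyconvex.rankOneConvex {w : Matrix (Fin 2) (Fin 2) ℝ → ℝ} (hw : Polyconvex w) :
    RankOneConvex w := by
  obtain ⟨g, hg, hwg⟩ := hw
  rintro A B hrank t ⟨ht₀, ht₁⟩
  have hdet : (t • A + (1 - t) • B).det = t * A.det + (1 - t) * B.det := by
    have hBA : (B - A).det = 0 := det_eq_zero_of_rank_lt_card (by simp [hrank])
    rw [det_smul_add_one_sub_smul_fin_two, hBA, mul_zero, sub_zero]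
  rw [hwg, hwg A, hwg B, hdet]
  exact hg.2 (Set.mem_univ (A, A.det)) (Set.mem_univ (B, B.det)) ht₀ (sub_nonneg.2 ht₁)
    (add_sub_cancel t 1)

lemma convexOn_max_norm_sub_zero_sq {E : Type*} [SeminormedAddCommGroup E] [NormedSpace ℝ E]
    (r : ℝ) : ConvexOn ℝ Set.univ fun x : E ↦ max (‖x‖ - r) 0 ^ 2 :=
  ((convexOn_univ_norm.sub (concaveOn_const r convex_univ)).sup (convexOn_const 0 convex_univ)).pow
    (fun _ _ ↦ le_max_right _ _) 2

/-- Twice the conformal part of a real 2×2 matrix, where the conformal matrix `!![x, -y; y, x]` is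
identified with `x + y i`. The factor 2 avoids a constant in `norm_twiceConformalPart_sq`. -/
@[simps]
def twiceConformalPart : Matrix (Fin 2) (Fin 2) ℝ →ₗ[ℝ] ℂ where
  toFun F := ⟨F 0 0 + F 1 1, F 1 0 - F 0 1⟩
  map_add' F G := by
    apply Complex.ext <;> simp only [Matrix.add_apply, Complex.add_re, Complex.add_im] <;> ring
  map_smul' t F := by
    apply Complex.ext <;>
      simp only [Matrix.smul_apply, smul_eq_mul, Complex.smul_re, Complex.smul_im,
        RingHom.id_apply] <;>
      ring

lemma norm_twiceConformalPart_sq (F : Matrix (Fin 2) (Fin 2) ℝ) :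
    ‖twiceConformalPart F‖ ^ 2 = frobSq F + 2 * F.det := by
  simp only [Complex.sq_norm, Complex.normSq_apply, twiceConformalPart_apply_re,
    twiceConformalPart_apply_im, frobSq, Fin.sum_univ_two, det_fin_two]
  ring

lemma Wtilde_eq_max_norm_sub_one_sq (F : Matrix (Fin 2) (Fin 2) ℝ) :
    Wtilde F = max (‖twiceConformalPart F‖ - 1) 0 ^ 2 + (1 - 2 * F.det) := by
  have hnorm := norm_nonneg (twiceConformalPart F)
  rw [Wtilde, ← norm_twiceConformalPart_sq, Real.sqrt_sq hnorm]
  split_ifs with h <;> rw [sq_lt_one_iff₀ hnorm] at h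
  · rw [max_eq_right (by linarith)]
    ring
  · rw [max_eq_left (by linarith), add_sub_assoc]

theorem polyconvex_Wtilde : Polyconvex Wtilde := by
  refine ⟨fun p ↦ max (‖twiceConformalPart p.1‖ - 1) 0 ^ 2 + (1 - 2 * p.2), ?_,
    Wtilde_eq_max_norm_sub_one_sq⟩
  have hdist : ConvexOn ℝ Set.univ fun p : Matrix (Fin 2) (Fin 2) ℝ × ℝ ↦
      max (‖twiceConformalPart p.1‖ - 1) 0 ^ 2 :=
    (convexOn_max_norm_sub_zero_sq 1).comp_linearMap (twiceConformalPart ∘ₗ LinearMap.fst ℝ _ ℝ)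
  have hdet : ConvexOn ℝ Set.univ fun p : Matrix (Fin 2) (Fin 2) ℝ × ℝ ↦ 1 - 2 * p.2 :=
    (convexOn_const 1 convex_univ).sub (((2 : ℝ) • LinearMap.snd ℝ _ ℝ).concaveOn convex_univ)
  exact hdist.add hdet

lemma exists_norm_eq_one_of_mem_SO2 {R : Matrix (Fin 2) (Fin 2) ℝ} (hR : R ∈ SO2) :
    ∃ u : ℂ, ‖u‖ = 1 ∧ R = !![u.re, -u.im; u.im, u.re] := by
  obtain ⟨horth, hdet⟩ := hR
  have hadj : R.adjugate = Rᵀ := by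
    rw [← inv_eq_left_inv horth, inv_def, hdet, Ring.inverse_one, one_smul]
  rw [adjugate_fin_two] at hadj
  have hdiag : R 1 1 = R 0 0 := congr_fun₂ hadj 0 0
  have hanti : -R 0 1 = R 1 0 := congr_fun₂ hadj 0 1
  refine ⟨⟨R 0 0, R 1 0⟩, ?_, ?_⟩
  · rw [det_fin_two] at hdet
    rw [← pow_eq_one_iff_of_nonneg (norm_nonneg _) two_ne_zero, Complex.sq_norm, Complex.normSq_mk]
    linear_combination hdet - R 0 0 * hdiag - R 1 0 * hanti
  · calc
      R = !![R 0 0, R 0 1; R 1 0, R 1 1] := eta_fin_two R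
      _ = !![R 0 0, -R 1 0; R 1 0, R 0 0] := by rw [hdiag, ← hanti, neg_neg]

lemma frobSq_sub_rotation (F : Matrix (Fin 2) (Fin 2) ℝ) {u : ℂ} (hu : ‖u‖ = 1) :
    frobSq (F - !![u.re, -u.im; u.im, u.re]) =
      ‖twiceConformalPart F - u‖ ^ 2 + (1 - 2 * F.det) := by
  have hcircle : u.re * u.re + u.im * u.im = 1 := by
    rw [← Complex.normSq_apply, ← Complex.sq_norm, hu, one_pow]
  simp only [frobSq, Fin.sum_univ_two, Matrix.sub_apply, of_apply, cons_val', cons_val_zero,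
    cons_val_one, cons_val_fin_one, Complex.sq_norm, Complex.normSq_apply, Complex.sub_re,
    Complex.sub_im, twiceConformalPart_apply_re, twiceConformalPart_apply_im, det_fin_two]
  linear_combination hcircle

theorem Wtilde_le_frobSq_sub (F : Matrix (Fin 2) (Fin 2) ℝ) {R : Matrix (Fin 2) (Fin 2) ℝ}
    (hR : R ∈ SO2) : Wtilde F ≤ frobSq (F - R) := by
  obtain ⟨u, hu, rfl⟩ := exists_norm_eq_one_of_mem_SO2 hR
  have hdist : max (‖twiceConformalPart F‖ - 1) 0 ≤ ‖twiceConformalPart F - u‖ :=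
    max_le (hu ▸ norm_sub_norm_le _ u) (norm_nonneg _)
  rw [Wtilde_eq_max_norm_sub_one_sq, frobSq_sub_rotation F hu]
  gcongr

lemma one_mem_SO2 : (1 : Matrix (Fin 2) (Fin 2) ℝ) ∈ SO2 :=
  ⟨by rw [transpose_one, one_mul], det_one⟩

theorem Wtilde_rankOneConvex_and_le_dist :
    RankOneConvex Wtilde ∧
    ∀ F : Matrix (Fin 2) (Fin 2) ℝ,
      Wtilde F ≤ sInf {x : ℝ | ∃ R ∈ SO2, x = frobSq (F - R)} := by
  refine ⟨polyconvex_Wtilde.rankOneConvex, fun F ↦ le_csInf ⟨_, 1, one_mem_SO2, rfl⟩ ?_⟩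
  rintro _ ⟨R, hR, rfl⟩
  exact Wtilde_le_frobSq_sub F hR
end
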